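/- Let H be a Hopf algebra over a field K and let {π^i_j : A_i → A_{ij} = A_{ji}}_{i,j∈J, i≠j} be a finite family of surjective right H-comodule algebra homomorphisms that is distributive and satisfies the cocycle condition. Suppose there exist two families of right H-colinear linear splittings α^i_j, β^i_j : A_{ij} → A_i of the π^i_j such that every β^i_j is unital and, for all distinct i,j,k ∈ J, α^i_j(π^i_j(ker π^i_k)) ⊆ ker π^i_k. Then for each i ∈ J the map α_i : A_i → A^π constructed by the recursive formula a^0_{κ_{m+1}} := β^{κ_{m+1}}_{κ_0}(π^{κ_0}_{κ_{m+1}}(a_{κ_0})), a^{k+1}_{κ_{m+1}} := a^k_{κ_{m+1}} − α^{κ_{m+1}}_{κ_{k+1}}(π^{κ_{m+1}}_{κ_{k+1}}(a^k_{κ_{m+1}}) − π^{κ_{k+1}}_{κ_{m+1}}(a_{κ_{k+1}})) (for a bijection κ : {0,…,n} → J with κ_0 = i, setting a_i := a and a_{κ_{m+1}} := a^m_{κ_{m+1}}) is a unital, right H-colinear linear splitting of the canonical projection π_i : A^π → A_i, where the coaction on A^π is componentwise. -/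

import Mathlib

/-!
Write `a_m` for the component of the constructed family at `κ m`. The family lies in the
multi-pullback because each new component is matched with the old ones one at a time: the step
`a^{k+1} = a^k - α(π(a^k) - π(a_{k+1}))` makes `a^{k+1}` agree with `a_{k+1}` since `α` splits `π`,
and it does not disturb the agreement with an earlier `a_l`. For the latter, `a^k` agrees with
`a_l` and `a_l` agrees with `a_{k+1}`, so the cocycle condition puts the discrepancy
`π(a^k) - π(a_{k+1})` into `π^{m+1}_{k+1}(ker π^{m+1}_l)`, which `α` maps into `ker π^{m+1}_l`
(`innerSeq_compat`, `finalSeq_compat`).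

Linearity, colinearity and unitality pass through the recursion, since every component is built
from composites and differences of colinear maps, and at `a = 1` all corrections vanish
(`GoodMap`, `innerSeq_good`, `finalSeq_good`).
-/

open TensorProduct

section MultiPullback

variable {K : Type*} [Field K] {J : Type*}
variable {A : J → Type*} [∀ i, Ring (A i)] [∀ i, Algebra K (A i)]
variable {B : Sym2 J → Type*} [∀ p, Ring (B p)] [∀ p, Algebra K (B p)]

/-- The gluing map `π^i_j : A_i → A_{ij}` (the target `A_{ij} = A_{ji}` depends only on the
unordered pair `{i,j}`). -/
def pL (π : ∀ (i : J) (p : Sym2 J), i ∈ p → (A i →ₐ[K] B p)) (i j : J) :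
    A i →ₐ[K] B s(i, j) :=
  π i s(i, j) (Sym2.mem_mk_left i j)

/-- The gluing map `π^j_i : A_j → A_{ij}`. -/
def pR (π : ∀ (i : J) (p : Sym2 J), i ∈ p → (A i →ₐ[K] B p)) (i j : J) :
    A j →ₐ[K] B s(i, j) :=
  π j s(i, j) (Sym2.mem_mk_right i j)

/-- A linear splitting `A_{ij} → A_i` of `π^i_j`, extracted from a family indexed by
membership in unordered pairs. -/
def sL (αs : ∀ (i : J) (p : Sym2 J), i ∈ p → (B p →ₗ[K] A i)) (i j : J) :
    B s(i, j) →ₗ[K] A i :=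
  αs i s(i, j) (Sym2.mem_mk_left i j)

/-- The multi-pullback algebra
`A^π = {(a_i) ∈ ∏ᵢ A_i | π^i_j(a_i) = π^j_i(a_j) for all i ≠ j}`. -/
def mpAlgebra (π : ∀ (i : J) (p : Sym2 J), i ∈ p → (A i →ₐ[K] B p)) :
    Subalgebra K (∀ i, A i) where
  carrier := {a | ∀ i j : J, i ≠ j → pL π i j (a i) = pR π i j (a j)}
  mul_mem' := by
    intro a b ha hb i j hij
    have : pL π i j ((a * b) i) = pR π i j ((a * b) j) := by
      simp only [Pi.mul_apply, map_mul, ha i j hij, hb i j hij]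
    exact this
  add_mem' := by
    intro a b ha hb i j hij
    have : pL π i j ((a + b) i) = pR π i j ((a + b) j) := by
      simp only [Pi.add_apply, map_add, ha i j hij, hb i j hij]
    exact this
  one_mem' := by
    intro i j hij
    have : pL π i j ((1 : ∀ i, A i) i) = pR π i j ((1 : ∀ i, A i) j) := by
      simp only [Pi.one_apply, map_one]
    exact this
  zero_mem' := by
    intro i j hij
    have : pL π i j ((0 : ∀ i, A i) i) = pR π i j ((0 : ∀ i, A i) j) := by
      simp only [Pi.zero_apply, map_zero]
    exact this
  algebraMap_mem' := by
    intro r i j hij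
    have : pL π i j (algebraMap K (∀ i, A i) r i) = pR π i j (algebraMap K (∀ i, A i) r j) := by
      simp only [Pi.algebraMap_apply, AlgHom.commutes]
    exact this

variable (π : ∀ (i : J) (p : Sym2 J), i ∈ p → (A i →ₐ[K] B p))
variable (αs βs : ∀ (i : J) (p : Sym2 J), i ∈ p → (B p →ₗ[K] A i))
variable (κ : ℕ → J)

/-- The inner recursion of Theorem 3.2 (`main-split`). -/
noncomputable def innerSeq (prev : ∀ k : ℕ, A (κ k)) (m1 : ℕ) : ℕ → A (κ m1)
  | 0 => sL βs (κ m1) (κ 0) (pR π (κ m1) (κ 0) (prev 0))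
  | k + 1 => innerSeq prev m1 k -
      sL αs (κ m1) (κ (k + 1))
        (pL π (κ m1) (κ (k + 1)) (innerSeq prev m1 k) -
          pR π (κ m1) (κ (k + 1)) (prev (k + 1)))

/-- Stage `t` of the construction. -/
noncomputable def stages (a : A (κ 0)) : ℕ → ∀ k : ℕ, A (κ k)
  | 0 => fun k => match k with
    | 0 => a
    | _ + 1 => 0
  | t + 1 => fun k =>
      if h : k = t + 1 then
        cast (congrArg (fun m => A (κ m)) h.symm)
          (innerSeq π αs βs κ (stages a t) (t + 1) t)
      else stages a t k

/-- The component `a_{κ_m}` of `α_i(a)`. -/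
noncomputable def finalSeq (a : A (κ 0)) (m : ℕ) : A (κ m) :=
  stages π αs βs κ a m m

end MultiPullback

/-- The sublattice of subspaces generated by a family `f` under `⊔` and `⊓`. -/
inductive GenLat {K A : Type*} [Field K] [AddCommGroup A] [Module K A] {ι : Type*}
    (f : ι → Submodule K A) : Submodule K A → Prop
  | base (i : ι) : GenLat f (f i)
  | sup {X Y : Submodule K A} : GenLat f X → GenLat f Y → GenLat f (X ⊔ Y)
  | inf {X Y : Submodule K A} : GenLat f X → GenLat f Y → GenLat f (X ⊓ Y)

section Colinear

variable {K H : Type*} [Field K] [Ring H] [Algebra K H]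

/-- `f` intertwines the linear maps `δM` and `δN`, which play the role of right coactions of
`H`. -/
def Colin {M N : Type*} [AddCommGroup M] [Module K M] [AddCommGroup N] [Module K N]
    (δM : M →ₗ[K] M ⊗[K] H) (δN : N →ₗ[K] N ⊗[K] H) (f : M →ₗ[K] N) : Prop :=
  δN ∘ₗ f = (TensorProduct.map f LinearMap.id) ∘ₗ δM

theorem Colin.comp {M N P : Type*} [AddCommGroup M] [Module K M] [AddCommGroup N] [Module K N]
    [AddCommGroup P] [Module K P]
    {δM : M →ₗ[K] M ⊗[K] H} {δN : N →ₗ[K] N ⊗[K] H} {δP : P →ₗ[K] P ⊗[K] H}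
    {g : N →ₗ[K] P} {f : M →ₗ[K] N} (hg : Colin δN δP g) (hf : Colin δM δN f) :
    Colin δM δP (g ∘ₗ f) := by
  unfold Colin at *
  have h : TensorProduct.map (g ∘ₗ f) (LinearMap.id : H →ₗ[K] H) =
      TensorProduct.map g LinearMap.id ∘ₗ TensorProduct.map f LinearMap.id :=
    LinearMap.rTensor_comp H g f
  rw [h, ← LinearMap.comp_assoc, hg, LinearMap.comp_assoc, hf, LinearMap.comp_assoc]

theorem Colin.sub {M N : Type*} [AddCommGroup M] [Module K M] [AddCommGroup N] [Module K N]
    {δM : M →ₗ[K] M ⊗[K] H} {δN : N →ₗ[K] N ⊗[K] H}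
    {g f : M →ₗ[K] N} (hg : Colin δM δN g) (hf : Colin δM δN f) :
    Colin δM δN (g - f) := by
  unfold Colin at *
  have h : TensorProduct.map (g - f) (LinearMap.id : H →ₗ[K] H) =
      TensorProduct.map g LinearMap.id - TensorProduct.map f LinearMap.id :=
    LinearMap.rTensor_sub g f
  rw [h, LinearMap.comp_sub, LinearMap.sub_comp, hg, hf]

/-- The function `f` is underlain by a unital, `H`-colinear `K`-linear map. -/
def GoodMap {M N : Type*} [Ring M] [Algebra K M] [Ring N] [Algebra K N]
    (δM : M →ₗ[K] M ⊗[K] H) (δN : N →ₗ[K] N ⊗[K] H) (f : M → N) : Prop :=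
  ∃ g : M →ₗ[K] N, (∀ a, g a = f a) ∧ g 1 = 1 ∧ Colin δM δN g

end Colinear

section Recursion

variable {K : Type*} [Field K] {J : Type*}
variable {A : J → Type*} [∀ i, Ring (A i)] [∀ i, Algebra K (A i)]
variable {B : Sym2 J → Type*} [∀ p, Ring (B p)] [∀ p, Algebra K (B p)]
variable (π : ∀ (i : J) (p : Sym2 J), i ∈ p → (A i →ₐ[K] B p))
variable (αs βs : ∀ (i : J) (p : Sym2 J), i ∈ p → (B p →ₗ[K] A i))
variable (κ : ℕ → J)

theorem compat_symm {i j : J} {x : A i} {y : A j} (h : pL π i j x = pR π i j y) :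
    pL π j i y = pR π j i x := by
  have key : ∀ (p q : Sym2 J) (_ : p = q) (hi : i ∈ p) (hj : j ∈ p) (hi' : i ∈ q) (hj' : j ∈ q),
      π i p hi x = π j p hj y → π j q hj' y = π i q hi' x := by
    rintro p q rfl hi hj hi' hj' h
    exact h.symm
  exact key _ _ Sym2.eq_swap _ _ _ _ h

theorem innerSeq_congr {prev prev' : ∀ k : ℕ, A (κ k)} (m1 t : ℕ)
    (h : ∀ k ≤ t, prev k = prev' k) :
    innerSeq π αs βs κ prev m1 t = innerSeq π αs βs κ prev' m1 t := by
  induction t with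
  | zero => simp only [innerSeq, h 0 le_rfl]
  | succ t ih =>
    simp only [innerSeq, h (t + 1) le_rfl, ih fun k hk => h k (by omega)]

/-- A stage never changes the components fixed by the earlier stages. -/
theorem stages_eq_finalSeq (a : A (κ 0)) (t k : ℕ) (hk : k ≤ t) :
    stages π αs βs κ a t k = finalSeq π αs βs κ a k := by
  induction t with
  | zero =>
    obtain rfl : k = 0 := by omega
    rfl
  | succ t ih =>
    rcases Nat.lt_or_ge t k with h | h
    · obtain rfl : k = t + 1 := by omega
      rfl
    · rw [← ih h, stages]
      exact dif_neg (by omega)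

theorem finalSeq_zero (a : A (κ 0)) : finalSeq π αs βs κ a 0 = a := rfl

theorem finalSeq_succ (a : A (κ 0)) (t : ℕ) :
    finalSeq π αs βs κ a (t + 1) =
      innerSeq π αs βs κ (finalSeq π αs βs κ a) (t + 1) t := by
  rw [finalSeq, stages]
  refine (dif_pos rfl).trans ?_
  exact innerSeq_congr π αs βs κ _ _ fun k hk => stages_eq_finalSeq π αs βs κ a t k hk

/-- If the components `prev 0, …, prev t` are pairwise compatible, then `innerSeq … t` is
compatible with each of them: the cocycle condition and the kernel condition on `α` ensure that
each correction preserves the compatibilities already achieved. -/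
theorem innerSeq_compat
    (hcoc2 : ∀ i j k : J, i ≠ j → i ≠ k → j ≠ k → ∀ (ai : A i) (aj : A j) (ak : A k),
      pL π i j ai - pR π i j aj ∈
        Submodule.map (pL π i j).toLinearMap (LinearMap.ker (pL π i k).toLinearMap) →
      pL π j k aj - pR π j k ak ∈
        Submodule.map (pL π j k).toLinearMap (LinearMap.ker (pL π j i).toLinearMap) →
      pL π i k ai - pR π i k ak ∈
        Submodule.map (pL π i k).toLinearMap (LinearMap.ker (pL π i j).toLinearMap))
    (hαsplit : ∀ i j : J, i ≠ j → ∀ b : B s(i, j), pL π i j (sL αs i j b) = b)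
    (hβsplit : ∀ i j : J, i ≠ j → ∀ b : B s(i, j), pL π i j (sL βs i j b) = b)
    (hker : ∀ i j k : J, i ≠ j → i ≠ k → j ≠ k → ∀ x : A i,
      pL π i k x = 0 → pL π i k (sL αs i j (pL π i j x)) = 0)
    (prev : ∀ k : ℕ, A (κ k)) (m1 t : ℕ)
    (hne : ∀ k ≤ t, κ m1 ≠ κ k)
    (hinj : ∀ k ≤ t, ∀ l < k, κ l ≠ κ k)
    (hprev : ∀ k ≤ t, ∀ l < k, pL π (κ l) (κ k) (prev l) = pR π (κ l) (κ k) (prev k)) :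
    ∀ l ≤ t, pL π (κ m1) (κ l) (innerSeq π αs βs κ prev m1 t) =
      pR π (κ m1) (κ l) (prev l) := by
  induction t with
  | zero =>
    intro l hl
    obtain rfl : l = 0 := by omega
    rw [innerSeq, hβsplit _ _ (hne 0 le_rfl)]
  | succ t ih =>
    have ih' := ih (fun k hk => hne k (by omega)) (fun k hk => hinj k (by omega))
      (fun k hk => hprev k (by omega))
    intro l hl
    rw [innerSeq, map_sub]
    rcases Nat.lt_or_ge t l with h | h
    · obtain rfl : l = t + 1 := by omega
      rw [hαsplit _ _ (hne _ le_rfl), sub_sub_cancel]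
    · have hlt : l < t + 1 := by omega
      have hc := hcoc2 (κ m1) (κ l) (κ (t + 1)) (hne l hl) (hne _ le_rfl)
        (hinj _ le_rfl l hlt) (innerSeq π αs βs κ prev m1 t) (prev l) (prev (t + 1))
        (by rw [ih' l h, sub_self]; exact Submodule.zero_mem _)
        (by rw [hprev _ le_rfl l hlt, sub_self]; exact Submodule.zero_mem _)
      obtain ⟨x, hx, hxe⟩ := hc
      have hxe' : pL π (κ m1) (κ (t + 1)) x = _ := hxe
      rw [← hxe', hker _ _ _ (hne _ le_rfl) (hne l hl) (hinj _ le_rfl l hlt).symm x hx,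
        sub_zero, ih' l h]

theorem finalSeq_compat
    (hcoc2 : ∀ i j k : J, i ≠ j → i ≠ k → j ≠ k → ∀ (ai : A i) (aj : A j) (ak : A k),
      pL π i j ai - pR π i j aj ∈
        Submodule.map (pL π i j).toLinearMap (LinearMap.ker (pL π i k).toLinearMap) →
      pL π j k aj - pR π j k ak ∈
        Submodule.map (pL π j k).toLinearMap (LinearMap.ker (pL π j i).toLinearMap) →
      pL π i k ai - pR π i k ak ∈
        Submodule.map (pL π i k).toLinearMap (LinearMap.ker (pL π i j).toLinearMap))
    (hαsplit : ∀ i j : J, i ≠ j → ∀ b : B s(i, j), pL π i j (sL αs i j b) = b)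
    (hβsplit : ∀ i j : J, i ≠ j → ∀ b : B s(i, j), pL π i j (sL βs i j b) = b)
    (hker : ∀ i j k : J, i ≠ j → i ≠ k → j ≠ k → ∀ x : A i,
      pL π i k x = 0 → pL π i k (sL αs i j (pL π i j x)) = 0)
    (n : ℕ) (hinj : ∀ k ≤ n, ∀ l < k, κ l ≠ κ k) (a : A (κ 0)) :
    ∀ k ≤ n, ∀ l < k, pL π (κ l) (κ k) (finalSeq π αs βs κ a l) =
      pR π (κ l) (κ k) (finalSeq π αs βs κ a k) := by
  intro k
  induction k using Nat.strong_induction_on with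
  | _ k ih =>
    intro hk l hl
    obtain ⟨t, rfl⟩ : ∃ t, k = t + 1 := ⟨k - 1, by omega⟩
    rw [finalSeq_succ]
    exact compat_symm π <|
      innerSeq_compat π αs βs κ hcoc2 hαsplit hβsplit hker _ (t + 1) t
        (fun k hkt => (hinj _ hk k (by omega)).symm) (fun k hkt => hinj k (by omega))
        (fun k hkt => ih k (by omega) (by omega)) l (by omega)

variable {H : Type*} [Ring H] [Algebra K H]
variable (δA : ∀ i : J, A i →ₐ[K] A i ⊗[K] H)
variable (δB : ∀ p : Sym2 J, B p →ₐ[K] B p ⊗[K] H)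

theorem innerSeq_good
    (hπL : ∀ i j : J, i ≠ j →
      Colin (δA i).toLinearMap (δB s(i, j)).toLinearMap (pL π i j).toLinearMap)
    (hπR : ∀ i j : J, i ≠ j →
      Colin (δA j).toLinearMap (δB s(i, j)).toLinearMap (pR π i j).toLinearMap)
    (hα : ∀ i j : J, i ≠ j → Colin (δB s(i, j)).toLinearMap (δA i).toLinearMap (sL αs i j))
    (hβ : ∀ i j : J, i ≠ j → Colin (δB s(i, j)).toLinearMap (δA i).toLinearMap (sL βs i j))
    (hβone : ∀ i j : J, i ≠ j → sL βs i j 1 = 1)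
    (prev : A (κ 0) → ∀ k : ℕ, A (κ k)) (m1 t : ℕ)
    (hne : ∀ k ≤ t, κ m1 ≠ κ k)
    (hprev : ∀ k ≤ t, GoodMap (δA (κ 0)).toLinearMap (δA (κ k)).toLinearMap
      fun a => prev a k) :
    GoodMap (δA (κ 0)).toLinearMap (δA (κ m1)).toLinearMap
      fun a => innerSeq π αs βs κ (prev a) m1 t := by
  induction t with
  | zero =>
    obtain ⟨g, hg, hg1, hgc⟩ := hprev 0 le_rfl
    have h0 := hne 0 le_rfl
    refine ⟨sL βs (κ m1) (κ 0) ∘ₗ (pR π (κ m1) (κ 0)).toLinearMap ∘ₗ g, ?_, ?_,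
      (hβ _ _ h0).comp ((hπR _ _ h0).comp hgc)⟩
    · intro a
      simp [innerSeq, hg]
    · simp [hg1, hβone _ _ h0]
  | succ t ih =>
    obtain ⟨f, hf, hf1, hfc⟩ := ih (fun k hk => hne k (by omega)) fun k hk => hprev k (by omega)
    obtain ⟨g, hg, hg1, hgc⟩ := hprev (t + 1) le_rfl
    have h0 := hne (t + 1) le_rfl
    refine ⟨f - sL αs (κ m1) (κ (t + 1)) ∘ₗ ((pL π (κ m1) (κ (t + 1))).toLinearMap ∘ₗ f -
        (pR π (κ m1) (κ (t + 1))).toLinearMap ∘ₗ g), ?_, ?_,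
      hfc.sub ((hα _ _ h0).comp (((hπL _ _ h0).comp hfc).sub ((hπR _ _ h0).comp hgc)))⟩
    · intro a
      simp [innerSeq, hg, hf]
    · simp [hg1, hf1]

theorem finalSeq_good
    (hπL : ∀ i j : J, i ≠ j →
      Colin (δA i).toLinearMap (δB s(i, j)).toLinearMap (pL π i j).toLinearMap)
    (hπR : ∀ i j : J, i ≠ j →
      Colin (δA j).toLinearMap (δB s(i, j)).toLinearMap (pR π i j).toLinearMap)
    (hα : ∀ i j : J, i ≠ j → Colin (δB s(i, j)).toLinearMap (δA i).toLinearMap (sL αs i j))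
    (hβ : ∀ i j : J, i ≠ j → Colin (δB s(i, j)).toLinearMap (δA i).toLinearMap (sL βs i j))
    (hβone : ∀ i j : J, i ≠ j → sL βs i j 1 = 1)
    (n : ℕ) (hinj : ∀ k ≤ n, ∀ l < k, κ l ≠ κ k) :
    ∀ k ≤ n, GoodMap (δA (κ 0)).toLinearMap (δA (κ k)).toLinearMap
      fun a => finalSeq π αs βs κ a k := by
  intro k
  induction k using Nat.strong_induction_on with
  | _ k ih =>
    intro hk
    rcases k with _ | t
    · refine ⟨LinearMap.id, fun a => rfl, rfl, ?_⟩
      simp [Colin]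
    · simp only [finalSeq_succ]
      exact innerSeq_good π αs βs κ δA δB hπL hπR hα hβ hβone _ (t + 1) t
        (fun k hkt => (hinj _ hk k (by omega)).symm)
        (fun k hkt => ih k (by omega) (by omega))

end Recursion

set_option synthInstance.maxHeartbeats 1000000 in
set_option maxHeartbeats 1000000 in
/-- Let `H` be a Hopf algebra and `{π^i_j : A_i → A_{ij}}` a finite
distributive family of surjective right `H`-comodule algebra homomorphisms satisfying the
cocycle condition (stated elementwise via equivalence (2.3) of the paper).  Given right
`H`-colinear linear splittings `α^i_j, β^i_j` of the `π^i_j` with all `β^i_j` unital and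
`α^i_j(π^i_j(ker π^i_k)) ⊆ ker π^i_k`, the map `α_i : A_i → A^π` constructed by the recursive
formula is a unital, right `H`-colinear linear splitting of the canonical projection
`π_i : A^π → A_i`, the coaction on `A^π` being componentwise. -/
theorem stmt_2 {K H : Type*} [Field K] [Ring H] [HopfAlgebra K H]
    {J : Type*} [Fintype J] [DecidableEq J]
    {A : J → Type*} [∀ i, Ring (A i)] [∀ i, Algebra K (A i)]
    {B : Sym2 J → Type*} [∀ p, Ring (B p)] [∀ p, Algebra K (B p)]
    -- the coactions, as unital algebra homomorphisms, coassociative and counital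
    (δA : ∀ i : J, A i →ₐ[K] A i ⊗[K] H)
    (δB : ∀ p : Sym2 J, B p →ₐ[K] B p ⊗[K] H)
    (hAcoassoc : ∀ i : J, (TensorProduct.assoc K (A i) H H).toLinearMap ∘ₗ
        (TensorProduct.map (δA i).toLinearMap LinearMap.id) ∘ₗ (δA i).toLinearMap =
      (TensorProduct.map LinearMap.id Coalgebra.comul) ∘ₗ (δA i).toLinearMap)
    (hAcounit : ∀ i : J, (TensorProduct.rid K (A i)).toLinearMap ∘ₗ
        (TensorProduct.map LinearMap.id Coalgebra.counit) ∘ₗ (δA i).toLinearMap = LinearMap.id)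
    (hBcoassoc : ∀ p : Sym2 J, ¬ p.IsDiag → (TensorProduct.assoc K (B p) H H).toLinearMap ∘ₗ
        (TensorProduct.map (δB p).toLinearMap LinearMap.id) ∘ₗ (δB p).toLinearMap =
      (TensorProduct.map LinearMap.id Coalgebra.comul) ∘ₗ (δB p).toLinearMap)
    (hBcounit : ∀ p : Sym2 J, ¬ p.IsDiag → (TensorProduct.rid K (B p)).toLinearMap ∘ₗ
        (TensorProduct.map LinearMap.id Coalgebra.counit) ∘ₗ (δB p).toLinearMap = LinearMap.id)
    (π : ∀ (i : J) (p : Sym2 J), i ∈ p → (A i →ₐ[K] B p))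
    -- the gluing maps are surjective and `H`-colinear
    (hsurj : ∀ i j : J, i ≠ j → Function.Surjective (pL π i j))
    (hπcolinL : ∀ i j : J, i ≠ j →
      (TensorProduct.map (pL π i j).toLinearMap LinearMap.id) ∘ₗ (δA i).toLinearMap =
      (δB s(i, j)).toLinearMap ∘ₗ (pL π i j).toLinearMap)
    (hπcolinR : ∀ i j : J, i ≠ j →
      (TensorProduct.map (pR π i j).toLinearMap LinearMap.id) ∘ₗ (δA j).toLinearMap =
      (δB s(i, j)).toLinearMap ∘ₗ (pR π i j).toLinearMap)
    -- the family is distributive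
    (hdist : ∀ i : J, ∀ X Y Z : Submodule K (A i),
      GenLat (fun j : {j : J // j ≠ i} => LinearMap.ker (pL π i j.1).toLinearMap) X →
      GenLat (fun j : {j : J // j ≠ i} => LinearMap.ker (pL π i j.1).toLinearMap) Y →
      GenLat (fun j : {j : J // j ≠ i} => LinearMap.ker (pL π i j.1).toLinearMap) Z →
      X ⊓ (Y ⊔ Z) = (X ⊓ Y) ⊔ (X ⊓ Z))
    -- cocycle condition, part 1
    (hcoc1 : ∀ i j k : J, i ≠ j → i ≠ k → j ≠ k →
      Submodule.map (pL π i j).toLinearMap (LinearMap.ker (pL π i k).toLinearMap) =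
      Submodule.map (pR π i j).toLinearMap (LinearMap.ker (pL π j k).toLinearMap))
    -- cocycle condition, part 2 (elementwise)
    (hcoc2 : ∀ i j k : J, i ≠ j → i ≠ k → j ≠ k → ∀ (ai : A i) (aj : A j) (ak : A k),
      pL π i j ai - pR π i j aj ∈
        Submodule.map (pL π i j).toLinearMap (LinearMap.ker (pL π i k).toLinearMap) →
      pL π j k aj - pR π j k ak ∈
        Submodule.map (pL π j k).toLinearMap (LinearMap.ker (pL π j i).toLinearMap) →
      pL π i k ai - pR π i k ak ∈
        Submodule.map (pL π i k).toLinearMap (LinearMap.ker (pL π i j).toLinearMap))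
    -- the `H`-colinear splittings `α^i_j` and `β^i_j` of the `π^i_j`
    (αs βs : ∀ (i : J) (p : Sym2 J), i ∈ p → (B p →ₗ[K] A i))
    (hαsplit : ∀ i j : J, i ≠ j → ∀ b : B s(i, j), pL π i j (sL αs i j b) = b)
    (hβsplit : ∀ i j : J, i ≠ j → ∀ b : B s(i, j), pL π i j (sL βs i j b) = b)
    (hαcolin : ∀ i j : J, i ≠ j →
      (δA i).toLinearMap ∘ₗ sL αs i j =
      (TensorProduct.map (sL αs i j) LinearMap.id) ∘ₗ (δB s(i, j)).toLinearMap)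
    (hβcolin : ∀ i j : J, i ≠ j →
      (δA i).toLinearMap ∘ₗ sL βs i j =
      (TensorProduct.map (sL βs i j) LinearMap.id) ∘ₗ (δB s(i, j)).toLinearMap)
    (hβone : ∀ i j : J, i ≠ j → sL βs i j 1 = 1)
    -- `α^i_j(π^i_j(ker π^i_k)) ⊆ ker π^i_k`
    (hker : ∀ i j k : J, i ≠ j → i ≠ k → j ≠ k → ∀ x : A i,
      pL π i k x = 0 → pL π i k (sL αs i j (pL π i j x)) = 0)
    -- `|J| = n + 1` and `κ : {0,…,n} → J` is a bijection, with `i := κ_0`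
    (n : ℕ) (κ : ℕ → J) (hκ : Function.Bijective (fun m : Fin (n + 1) => κ m.1)) :
    ∃ alph : A (κ 0) →ₗ[K] ↥(mpAlgebra π),
      (∀ (a : A (κ 0)) (m : ℕ), m ≤ n →
        ((alph a : ∀ j, A j) (κ m)) = finalSeq π αs βs κ a m) ∧
      alph 1 = 1 ∧
      (∀ a : A (κ 0), ((alph a : ∀ j, A j) (κ 0)) = a) ∧
      -- `alph` is right `H`-colinear (componentwise, w.r.t. the componentwise coaction)
      (∀ j : J,
        (δA j).toLinearMap ∘ₗ
          ((LinearMap.proj j) ∘ₗ (mpAlgebra π).val.toLinearMap ∘ₗ alph) =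
        (TensorProduct.map
          ((LinearMap.proj j) ∘ₗ (mpAlgebra π).val.toLinearMap ∘ₗ alph) LinearMap.id) ∘ₗ
          (δA (κ 0)).toLinearMap) := by
  have hinj : ∀ k ≤ n, ∀ l ≤ n, κ l = κ k → l = k := by
    intro k hk l hl h
    have := @hκ.1 ⟨l, by omega⟩ ⟨k, by omega⟩ h
    exact congrArg Fin.val this
  have hinj' : ∀ k ≤ n, ∀ l < k, κ l ≠ κ k := fun k hk l hl h =>
    absurd (hinj k hk l (by omega) h) (by omega)
  have hsur : ∀ j : J, ∃ m ≤ n, κ m = j := by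
    intro j
    obtain ⟨m, hm⟩ := hκ.2 j
    exact ⟨m.1, by omega, hm⟩
  have hgood := finalSeq_good π αs βs κ δA δB (fun i j h => (hπcolinL i j h).symm)
    (fun i j h => (hπcolinR i j h).symm) hαcolin hβcolin hβone n hinj'
  -- An arbitrary `j` is only propositionally of the form `κ m`, whence the heterogeneous equality.
  have hex : ∀ j : J, ∃ g : A (κ 0) →ₗ[K] A j,
      (∀ m ≤ n, κ m = j → ∀ a, HEq (g a) (finalSeq π αs βs κ a m)) ∧ g 1 = 1 ∧
        Colin (δA (κ 0)).toLinearMap (δA j).toLinearMap g := by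
    intro j
    obtain ⟨m, hm, rfl⟩ := hsur j
    obtain ⟨g, hg, hg1, hgc⟩ := hgood m hm
    refine ⟨g, ?_, hg1, hgc⟩
    intro m' hm' he a
    obtain rfl := hinj m hm m' hm' he
    exact heq_of_eq (hg a)
  choose G hG hG1 hGc using hex
  have hGκ : ∀ m ≤ n, ∀ a, G (κ m) a = finalSeq π αs βs κ a m := fun m hm a =>
    eq_of_heq (hG _ m hm rfl a)
  have hcompat := finalSeq_compat π αs βs κ hcoc2 hαsplit hβsplit hker n hinj'
  have hmem : ∀ a, LinearMap.pi G a ∈ Subalgebra.toSubmodule (mpAlgebra π) := by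
    intro a i j hij
    change pL π i j (G i a) = pR π i j (G j a)
    obtain ⟨k, hk, rfl⟩ := hsur i
    obtain ⟨l, hl, rfl⟩ := hsur j
    rw [hGκ k hk, hGκ l hl]
    rcases lt_trichotomy k l with h | rfl | h
    · exact hcompat a l hl k h
    · exact absurd rfl hij
    · exact compat_symm π (hcompat a k hk l h)
  refine ⟨LinearMap.codRestrict (Subalgebra.toSubmodule (mpAlgebra π)) (LinearMap.pi G) hmem,
    fun a m hm => hGκ m hm a, ?_, fun a => hGκ 0 (Nat.zero_le n) a, fun j => hGc j⟩
  apply Subtype.ext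
  funext j
  exact hG1 j
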